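/- arXiv:2108.13968 — 4 statements merged into one kernel-verified Lean document; each statement's English description precedes it below -/
import Mathlib

section
/- Let v and w be words over an alphabet Σ with |v| = m+1 and |w| = n. Then v is a minimal absent subsequence of w if and only if there exist positions 0 = i_0 < i_1 < … < i_m < i_{m+1} = n+1 such that all of the following hold: (i) v = w[i_1]⋯w[i_m]·v[m+1]; (ii) the letter v[1] does not occur in w[1:i_1−1]; (iii) for every k ∈ [2:m+1], the letter v[k] does not occur in w[i_{k−1}+1 : i_k−1]; (iv) for every k ∈ [2:m+1], the letter v[k] occurs in w[i_{k−2}+1 : i_{k−1}]. -/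
/-!
Write `i k` for the end of the shortest prefix of `w` containing the first `k` letters of `v`. These
leftmost (greedy) positions satisfy conditions (i)-(iii), and conversely (i)-(iii) force the
positions to be the greedy ones. Their defining property is `take_append_sublist_iff`:
`v.take k ++ u` is a subsequence of `w` exactly when `u` is a subsequence of `w.drop (i k)`.

Everything follows from this equivalence. With `k = m` it says that `v` is absent iff its last
letter does not occur after position `i m`, which is (iii) for the last letter together with
`i (m + 1) = n + 1`. It also says that deleting from `v` the letter with zero-based index `k` gives
a subsequence of `w` iff `v.drop (k + 1)` is a subsequence of `w.drop (i k)`. Under (iv), such an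
embedding is obtained by placing each remaining letter one block earlier than its greedy block.
Conversely, if (iv) failed, the embedding of `v.drop (k + 1)` would avoid the block ending at
`i (k + 1)` and so, by the equivalence, all of `v` would embed in `w`. By
`exists_sublist_eraseIdx` it suffices to consider subsequences with a single letter deleted.
-/

/-- `v` is a minimal absent subsequence (MAS) of `w`: `v` is not a subsequence of `w`,
but every proper subsequence of `v` is a subsequence of `w`. -/
def IsMAS {α : Type*} (w v : List α) : Prop :=
  ¬ v.Sublist w ∧ ∀ u : List α, u.Sublist v → u ≠ v → u.Sublist w

/-- Every proper subsequence is contained in one that omits exactly one letter. -/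
theorem exists_sublist_eraseIdx {α : Type*} {u v : List α} (h : u.Sublist v) (hne : u ≠ v) :
    ∃ k < v.length, u.Sublist (v.eraseIdx k) := by
  induction h with
  | slnil => exact absurd rfl hne
  | @cons l₁ l₂ a h ih => exact ⟨0, by simp, by simpa using h⟩
  | @cons_cons l₁ l₂ a h ih =>
    obtain ⟨k, hk, hs⟩ := ih (fun e => hne (by rw [e]))
    exact ⟨k + 1, by simpa using hk, by simpa using hs⟩

theorem cons_sublist_of_notMem_append {α : Type*} {a : α} {u x y : List α} (ha : a ∉ x)
    (h : (a :: u).Sublist (x ++ y)) : (a :: u).Sublist y := by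
  induction x with
  | nil => simpa using h
  | cons b x ih =>
    simp only [List.mem_cons, not_or] at ha
    rw [List.cons_append] at h
    cases h with
    | cons _ h => exact ih ha.2 h
    | cons_cons _ h => exact absurd rfl ha.1

theorem drop_eq_take_append_drop {α : Type*} (w : List α) {s t : ℕ} (h : s ≤ t) :
    w.drop s = (w.drop s).take (t - s) ++ w.drop t := by
  have h1 := (List.take_append_drop (t - s) (w.drop s)).symm
  rwa [List.drop_drop, Nat.add_sub_cancel' h] at h1

theorem drop_eq_getD_cons {α : Type*} [Inhabited α] (w : List α) {s : ℕ} (h : s < w.length) :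
    w.drop s = w.getD s default :: w.drop (s + 1) := by
  rw [List.drop_eq_getElem_cons h, List.getD_eq_getElem _ _ h]

theorem take_succ_eq_append_getD {α : Type*} [Inhabited α] (v : List α) {k : ℕ}
    (h : k < v.length) : v.take (k + 1) = v.take k ++ [v.getD k default] := by
  rw [List.getD_eq_getElem _ _ h, List.take_append_getElem h]

/-- One greedy step: the first letter may be matched with its leftmost occurrence, which is at the
one-based position `t`. -/
theorem cons_sublist_drop_iff {α : Type*} [Inhabited α] {w u : List α} {a : α} {s t : ℕ}
    (hst : s < t) (ht : t ≤ w.length) (hat : a = w.getD (t - 1) default)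
    (hn : a ∉ (w.drop s).take (t - 1 - s)) :
    (a :: u).Sublist (w.drop s) ↔ u.Sublist (w.drop t) := by
  have h1 := drop_eq_take_append_drop w (s := s) (t := t - 1) (by omega)
  have h2 := drop_eq_getD_cons w (s := t - 1) (by omega)
  rw [← hat, Nat.sub_add_cancel (by omega)] at h2
  constructor
  · intro h
    rw [h1] at h
    have h3 := cons_sublist_of_notMem_append hn h
    rw [h2] at h3
    exact List.cons_sublist_cons.1 h3
  · intro h
    rw [h1, h2]
    exact (List.cons_sublist_cons.2 h).trans (List.sublist_append_right _ _)

/-- The universal property of the greedy positions `i`: the first `K` letters of `v` may be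
matched greedily, whatever letters follow. -/
theorem take_append_sublist_iff {α : Type*} [Inhabited α] {v w : List α} {i : ℕ → ℕ} (K : ℕ)
    (hK : K ≤ v.length) (h0 : i 0 = 0)
    (H : ∀ k < K, i k < i (k + 1) ∧ i (k + 1) ≤ w.length ∧
      v.getD k default = w.getD (i (k + 1) - 1) default ∧
      v.getD k default ∉ (w.drop (i k)).take (i (k + 1) - 1 - i k)) (u : List α) :
    (v.take K ++ u).Sublist w ↔ u.Sublist (w.drop (i K)) := by
  induction K generalizing u with
  | zero => simp [h0]
  | succ K ih =>
    have e : v.take (K + 1) ++ u = v.take K ++ (v.getD K default :: u) := by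
      rw [take_succ_eq_append_getD v (by omega), List.append_assoc, List.singleton_append]
    obtain ⟨a, b, c, d⟩ := H K (by omega)
    rw [e, ih (by omega) (fun k hk => H k (by omega)), cons_sublist_drop_iff a b c d]

theorem notMem_take_idxOf {α : Type*} [DecidableEq α] (a : α) (l : List α) :
    a ∉ l.take (l.idxOf a) := by
  induction l with
  | nil => simp
  | cons b l ih =>
    by_cases h : b = a
    · simp [h]
    · simp [List.idxOf_cons_ne _ h, ih, Ne.symm h]

open Classical in
/-- The greedy positions of the letters of `v` in `w`, one-based, with `greedy v w 0 = 0`. Since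
`List.idxOf` returns the length of the list for a missing letter, the first letter that cannot be
matched is assigned position `|w| + 1`. -/
noncomputable def greedy {α : Type*} [Inhabited α] (v w : List α) : ℕ → ℕ
  | 0 => 0
  | k + 1 => greedy v w k + (w.drop (greedy v w k)).idxOf (v.getD k default) + 1

theorem greedy_lt_succ {α : Type*} [Inhabited α] (v w : List α) (k : ℕ) :
    greedy v w k < greedy v w (k + 1) := by
  rw [greedy]; omega

theorem greedy_notMem {α : Type*} [Inhabited α] (v w : List α) (k : ℕ) :
    v.getD k default ∉ (w.drop (greedy v w k)).take (greedy v w (k + 1) - 1 - greedy v w k) := by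
  classical
  have e : greedy v w (k + 1) - 1 - greedy v w k =
      (w.drop (greedy v w k)).idxOf (v.getD k default) := by
    rw [greedy]
    have : ∀ a b : ℕ, a + b + 1 - 1 - a = b := by omega
    convert this _ _
  rw [e]
  exact notMem_take_idxOf _ _

/-- A letter occurring after the previous greedy position is matched within `w`. -/
theorem greedy_mem {α : Type*} [Inhabited α] (v w : List α) (k : ℕ)
    (h : v.getD k default ∈ w.drop (greedy v w k)) :
    greedy v w (k + 1) ≤ w.length ∧
      v.getD k default = w.getD (greedy v w (k + 1) - 1) default := by
  classical
  have h1 := List.idxOf_lt_length_of_mem h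
  have h2 := List.getElem_idxOf h1
  have e : greedy v w (k + 1) =
      greedy v w k + (w.drop (greedy v w k)).idxOf (v.getD k default) + 1 := by
    rw [greedy]
  rw [List.length_drop] at h1
  rw [List.getElem_drop] at h2
  refine ⟨by omega, ?_⟩
  rw [e, Nat.add_sub_cancel, List.getD_eq_getElem w _ (by omega)]
  exact h2.symm

/-- The greedy positions exist within `w` for every prefix of `v` that is a subsequence of `w`. -/
theorem greedy_spec {α : Type*} [Inhabited α] (v w : List α) (m : ℕ) (hm : m ≤ v.length)
    (h : (v.take m).Sublist w) : ∀ k < m,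
      greedy v w k < greedy v w (k + 1) ∧ greedy v w (k + 1) ≤ w.length ∧
      v.getD k default = w.getD (greedy v w (k + 1) - 1) default ∧
      v.getD k default ∉
        (w.drop (greedy v w k)).take (greedy v w (k + 1) - 1 - greedy v w k) := by
  intro k
  induction k using Nat.strong_induction_on with
  | _ k ih =>
    intro hk
    have G := take_append_sublist_iff (v := v) (w := w) (i := greedy v w) k (by omega) rfl
      (fun j hj => ih j hj (by omega)) [v.getD k default]
    rw [← take_succ_eq_append_getD v (by omega), List.singleton_sublist] at G
    obtain ⟨a, b⟩ := greedy_mem v w k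
      (G.1 ((List.take_sublist_take_left (by omega)).trans h))
    exact ⟨greedy_lt_succ v w k, a, b, greedy_notMem v w k⟩

/-- Theorem 3.1: characterisation of minimal absent subsequences.
Positions are 1-based: `w[j]` is `w.getD (j-1) default`, and the factor
`w[a:b]` (1-based, inclusive) is `(w.drop (a-1)).take (b-a+1)`. -/
theorem mas_characterisation {α : Type*} [Inhabited α] (v w : List α) (m n : ℕ)
    (hv : v.length = m + 1) (hw : w.length = n) :
    IsMAS w v ↔
      ∃ i : ℕ → ℕ,
        i 0 = 0 ∧ i (m + 1) = n + 1 ∧ (∀ k ≤ m, i k < i (k + 1)) ∧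
        -- (i)  v = w[i₁]⋯w[i_m]·v[m+1]
        (∀ k, 1 ≤ k → k ≤ m → v.getD (k - 1) default = w.getD (i k - 1) default) ∧
        -- (ii)  v[1] ∉ alph(w[1 : i₁-1])
        v.getD 0 default ∉ w.take (i 1 - 1) ∧
        -- (iii)  v[k] ∉ alph(w[i_{k-1}+1 : i_k-1]) for all k ∈ [2 : m+1]
        (∀ k, 2 ≤ k → k ≤ m + 1 →
          v.getD (k - 1) default ∉ (w.drop (i (k - 1))).take (i k - 1 - i (k - 1))) ∧
        -- (iv)  v[k] ∈ alph(w[i_{k-2}+1 : i_{k-1}]) for all k ∈ [2 : m+1]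
        (∀ k, 2 ≤ k → k ≤ m + 1 →
          v.getD (k - 1) default ∈ (w.drop (i (k - 2))).take (i (k - 1) - i (k - 2))) := by
  subst hw
  constructor
  · rintro ⟨habs, hmin⟩
    have hpre : (v.take m).Sublist w := by
      refine hmin _ (List.take_sublist _ _) (fun e => ?_)
      have := congrArg List.length e
      simp only [List.length_take] at this
      omega
    have S := greedy_spec v w m (by omega) hpre
    have G := fun K (hK : K ≤ m) => take_append_sublist_iff (v := v) (w := w) (i := greedy v w) K
      (by omega) rfl (fun k hk => S k (by omega))
    have hle : greedy v w m ≤ w.length := by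
      rcases m with _ | m
      · simp [greedy]
      · exact (S m (by omega)).2.1
    have hlast : v.getD m default ∉ w.drop (greedy v w m) := by
      intro hmem
      refine habs ?_
      have h1 := (G m le_rfl [v.getD m default]).2 (List.singleton_sublist.2 hmem)
      have h2 : [v.getD m default] = v.drop m := by
        rw [drop_eq_getD_cons v (by omega), List.drop_eq_nil_of_le (by omega)]
      rwa [h2, List.take_append_drop] at h1
    refine ⟨greedy v w, rfl, ?_, fun k _ => greedy_lt_succ v w k, ?_, ?_, ?_, ?_⟩
    · classical
      have := List.idxOf_eq_length hlast
      rw [List.length_drop] at this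
      have e : greedy v w (m + 1) =
          greedy v w m + (w.drop (greedy v w m)).idxOf (v.getD m default) + 1 := by
        rw [greedy]
      omega
    · intro k h1 h2
      obtain ⟨k, rfl⟩ := Nat.exists_eq_add_of_le' h1
      exact (S k (by omega)).2.2.1
    · simpa [greedy] using greedy_notMem v w 0
    · intro k h1 h2
      obtain ⟨k, rfl⟩ := Nat.exists_eq_add_of_le' (show 1 ≤ k by omega)
      exact greedy_notMem v w k
    · intro k h1 h2
      obtain ⟨k, rfl⟩ := Nat.exists_eq_add_of_le' h1
      change v.getD (k + 1) default ∈
        (w.drop (greedy v w k)).take (greedy v w (k + 1) - greedy v w k)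
      by_contra hno
      refine habs ?_
      have hdel : (v.eraseIdx k).Sublist w := by
        refine hmin _ (List.eraseIdx_sublist _ _) (fun e => ?_)
        have := congrArg List.length e
        rw [List.length_eraseIdx_of_lt (by omega)] at this
        omega
      rw [List.eraseIdx_eq_take_drop_succ, G k (by omega),
        drop_eq_getD_cons v (s := k + 1) (by omega),
        drop_eq_take_append_drop w (greedy_lt_succ v w k).le] at hdel
      -- the embedding skips the block ending at the greedy position of the deleted letter,
      -- so that letter can be put back
      have h3 := cons_sublist_of_notMem_append hno hdel
      rw [← drop_eq_getD_cons v (s := k + 1) (by omega), ← G (k + 1) (by omega),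
        List.take_append_drop] at h3
      exact h3
  · rintro ⟨i, h0, hend, hlt, hi, hii, hiii, hiv⟩
    have hle : ∀ d k, k + d = m → i k ≤ w.length := by
      intro d
      induction d with
      | zero =>
        intro k hk
        obtain rfl : k = m := hk
        have := hlt k le_rfl
        omega
      | succ d ih =>
        intro k hk
        have := ih (k + 1) (by omega)
        have := hlt k (by omega)
        omega
    have hno : ∀ k ≤ m,
        v.getD k default ∉ (w.drop (i k)).take (i (k + 1) - 1 - i k) := by
      intro k hk
      rcases k with _ | k
      · simpa [h0] using hii
      · exact hiii (k + 2) (by omega) (by omega)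
    have G := fun K (hK : K ≤ m) => take_append_sublist_iff (v := v) (w := w) (i := i) K
      (by omega) h0 (fun k hk => ⟨hlt k (by omega), hle (m - (k + 1)) (k + 1) (by omega),
        hi (k + 1) (by omega) (by omega), hno k (by omega)⟩)
    constructor
    · intro h
      rw [← List.take_append_drop m v, G m le_rfl, drop_eq_getD_cons v (by omega)] at h
      refine hno m le_rfl ?_
      rw [List.take_of_length_le (by rw [List.length_drop]; omega)]
      exact h.subset List.mem_cons_self
    · -- each letter after a deleted one is placed one block earlier than in the greedy matching
      have hshift : ∀ d k, k + d = m → (v.drop (k + 1)).Sublist (w.drop (i k)) := by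
        intro d
        induction d with
        | zero =>
          intro k hk
          rw [List.drop_eq_nil_of_le (by omega)]
          exact List.nil_sublist _
        | succ d ih =>
          intro k hk
          have h1 := hiv (k + 2) (by omega) (by omega)
          rw [drop_eq_getD_cons v (s := k + 1) (by omega),
            drop_eq_take_append_drop w (hlt k (by omega)).le]
          exact (List.singleton_sublist.2 h1).append (ih (k + 1) (by omega))
      intro u hu hne
      obtain ⟨k, hk, hs⟩ := exists_sublist_eraseIdx hu hne
      refine hs.trans ?_
      rw [List.eraseIdx_eq_take_drop_succ, G k (by omega)]
      exact hshift (m - k) k (by omega)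
end

section
/- Let w be a word with arch factorisation w = ar_w(1)⋯ar_w(ι(w))·r(w) and |w| = n. Then v is a shortest absent subsequence of w if and only if there are positions i_0 = 0, i_ℓ lying inside the ℓ-th arch ar_w(ℓ) for each 1 ≤ ℓ ≤ ι(w), and i_{ι(w)+1} = n+1 that satisfy the four conditions of the MAS characterisation: (i) v = w[i_1]⋯w[i_{ι(w)}]·v[ι(w)+1]; (ii) v[1] does not occur in w[1:i_1−1]; (iii) for every k ∈ [2:ι(w)+1], v[k] does not occur in w[i_{k−1}+1 : i_k−1]; (iv) for every k ∈ [2:ι(w)+1], v[k] occurs in w[i_{k−2}+1 : i_{k−1}]. -/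
/-!
Every word of length at most `ι(w)` over `alph(w)` embeds into `w`, and some word of length
`ι(w) + 1` does not, so a shortest absent subsequence is an absent word over `alph(w)` of length
exactly `ι(w) + 1` (`isSAS_iff`).

Given such a `v`, let `i k` be the length of the shortest prefix of `w` into which the prefix of
`v` of length `k` embeds. Since every arch contains every letter, `k` letters embed into the first
`k` arches, so `i k` is at most the end of the `k`-th arch. If `i k` were at most the end of arch
`k - 1`, the remaining `ι(w) + 1 - k` letters would embed into the remaining arches and `v` would
be a subsequence of `w`; hence `i k` lies in the `k`-th arch. Minimality of `i k` gives
(i), (ii) and (iii). Finally, arch `k - 1` contains `v[k]`, and (iii) forbids an occurrence of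
`v[k]` in the part of that arch beyond `i (k - 1)`, which yields (iv).

Conversely, (ii) and (iii) show by induction on `k` that the prefix of `v` of length `k` does not
embed into `w[1 : i k - 1]`; for `k = ι(w) + 1` this says that `v` is absent from `w`.
-/

/-- `v` is a shortest absent subsequence (SAS) of `w`: `v` is a word over `alph(w)`
which is not a subsequence of `w`, of minimal length with this property. -/
def IsSAS {α : Type*} (w v : List α) : Prop :=
  (∀ a ∈ v, a ∈ w) ∧ ¬ v.Sublist w ∧
    ∀ u : List α, (∀ a ∈ u, a ∈ w) → ¬ u.Sublist w → v.length ≤ u.length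

/-- The universality index `ι(w)`: the largest `k` such that every word of length at most `k`
over `alph(w)` is a subsequence of `w`. -/
noncomputable def univIndex {α : Type*} (w : List α) : ℕ :=
  sSup {k | ∀ v : List α, (∀ a ∈ v, a ∈ w) → v.length ≤ k → v.Sublist w}

/-- A letter occurs in `w[p+1 : q]` iff it sits at some (0-based) index in `[p, q)`. -/
lemma mem_slice {α : Type*} (w : List α) (p q : ℕ) (a : α) :
    a ∈ (w.drop p).take (q - p) ↔ ∃ j, p ≤ j ∧ j < q ∧ w[j]? = some a := by
  rw [List.mem_iff_getElem?]
  constructor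
  · rintro ⟨j, hj⟩
    rw [List.getElem?_take] at hj
    split_ifs at hj with h
    rw [List.getElem?_drop] at hj
    exact ⟨p + j, by omega, by omega, hj⟩
  · rintro ⟨j, h1, h2, h3⟩
    refine ⟨j - p, ?_⟩
    rw [List.getElem?_take, if_pos (by omega), List.getElem?_drop, ← h3]
    congr 1
    omega

/-- The last letter of an embedded word cannot be matched in a part of the host avoiding it. -/
lemma snoc_sublist_of_not_mem {α : Type*} {l s t : List α} {a : α}
    (h : (l ++ [a]).Sublist (s ++ t)) (ha : a ∉ t) : (l ++ [a]).Sublist s := by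
  obtain ⟨l1, l2, e, h1, h2⟩ := List.sublist_append_iff.1 h
  rcases List.eq_nil_or_concat l2 with rfl | ⟨l3, b, rfl⟩
  · simpa [e] using h1
  · rw [List.concat_eq_append] at e h2
    rw [← List.append_assoc] at e
    obtain ⟨-, e2⟩ := List.append_inj' e rfl
    simp only [List.cons.injEq, and_true] at e2
    exact absurd (h2.subset (by simp [e2])) ha

lemma sublist_of_snoc_sublist_snoc {α : Type*} {l s : List α} {a b : α}
    (h : (l ++ [a]).Sublist (s ++ [b])) : l.Sublist s := by
  have h' := List.reverse_sublist.2 h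
  simp only [List.reverse_append, List.reverse_cons, List.reverse_nil, List.nil_append,
    List.singleton_append] at h'
  exact List.reverse_sublist.1 (by simpa using h'.tail)

lemma take_snoc {α : Type*} [Inhabited α] (v : List α) (k : ℕ) (hk : 1 ≤ k)
    (hkl : k ≤ v.length) :
    v.take k = v.take (k - 1) ++ [v.getD (k - 1) default] := by
  obtain ⟨k, rfl⟩ : ∃ j, k = j + 1 := ⟨k - 1, by omega⟩
  simp only [Nat.add_sub_cancel]
  rw [List.take_add_one, List.getD_eq_getElem _ _ (by omega),
    List.getElem?_eq_getElem (by omega)]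
  rfl

lemma take_split {α : Type*} (w : List α) {p q : ℕ} (h : p ≤ q) :
    w.take q = w.take p ++ (w.drop p).take (q - p) := by
  obtain ⟨d, rfl⟩ := Nat.exists_eq_add_of_le h
  rw [List.take_add, Nat.add_sub_cancel_left]

/-- A word with at most as many letters as there are blocks embeds into the concatenation of the
blocks, one letter per block, provided each block contains every letter of the word. -/
lemma sublist_flatten_of_universal {α : Type*} (L : List (List α)) :
    ∀ u : List α, (∀ b ∈ L, ∀ a ∈ u, a ∈ b) → u.length ≤ L.length → u.Sublist L.flatten := by
  induction L with
  | nil =>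
    intro u _ h
    simp only [List.length_nil, Nat.le_zero, List.length_eq_zero_iff] at h
    simp [h]
  | cons b L ih =>
    rintro (_ | ⟨a, u⟩) h1 h2
    · simp
    · have hu : u.Sublist L.flatten :=
        ih u (fun c hc x hx => h1 c (by simp [hc]) x (by simp [hx])) (by simpa using h2)
      have ha : [a].Sublist b := List.singleton_sublist.2 (h1 b (by simp) a (by simp))
      simpa using ha.append hu

lemma flatten_take_add_drop {α : Type*} (A : List (List α)) (k : ℕ) :
    A.flatten = (A.take k).flatten ++ (A.drop k).flatten := by
  rw [← List.flatten_append, List.take_append_drop]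

lemma take_arch_end {α : Type*} (A : List (List α)) (r : List α) (k : ℕ) :
    (A.flatten ++ r).take (A.take k).flatten.length = (A.take k).flatten := by
  rw [flatten_take_add_drop A k, List.append_assoc, List.take_left]

/-- A letter of the `(k+1)`-st arch sits between the ends of arches `k` and `k + 1`. -/
lemma exists_index_in_arch {α : Type*} (A : List (List α)) (r : List α) (k : ℕ)
    (hk : k < A.length) (a : α) (ha : a ∈ A[k]) :
    ∃ j, (A.take k).flatten.length ≤ j ∧ j < (A.take (k + 1)).flatten.length ∧
      (A.flatten ++ r)[j]? = some a := by
  obtain ⟨d, hd, rfl⟩ := List.getElem_of_mem ha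
  have e : (A.take (k + 1)).flatten = (A.take k).flatten ++ A[k] := by
    rw [List.take_add_one, List.getElem?_eq_getElem hk, List.flatten_append,
      Option.toList_some, List.flatten_singleton]
  refine ⟨(A.take k).flatten.length + d, by omega, by rw [e, List.length_append]; omega, ?_⟩
  rw [flatten_take_add_drop A (k + 1), e, List.append_assoc, List.append_assoc,
    List.getElem?_append_right (by omega), Nat.add_sub_cancel_left,
    List.getElem?_append_left hd, List.getElem?_eq_getElem hd]

/-- No power `a ^ (|w| + 1)` embeds into `w`, so the supremum defining `univIndex` is over a
bounded set and not a junk value. -/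
lemma univIndex_bddAbove {α : Type*} (w : List α) (hw : w ≠ []) :
    BddAbove {k | ∀ v : List α, (∀ a ∈ v, a ∈ w) → v.length ≤ k → v.Sublist w} := by
  obtain ⟨a, ha⟩ := List.exists_mem_of_ne_nil w hw
  refine ⟨w.length, fun k hk => ?_⟩
  have := (hk (List.replicate k a) (fun b hb => List.eq_of_mem_replicate hb ▸ ha)
    (by simp)).length_le
  simpa using this

lemma sublist_of_length_le_univIndex {α : Type*} (w : List α) (hw : w ≠ []) (v : List α)
    (hv : ∀ a ∈ v, a ∈ w) (h : v.length ≤ univIndex w) : v.Sublist w := by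
  refine Nat.sSup_mem ?_ (univIndex_bddAbove w hw) v hv h
  refine ⟨0, fun u _ h0 => ?_⟩
  rw [List.length_eq_zero_iff.1 (Nat.le_zero.1 h0)]
  exact List.nil_sublist w

lemma one_le_univIndex {α : Type*} (w : List α) (hw : w ≠ []) : 1 ≤ univIndex w := by
  refine le_csSup (univIndex_bddAbove w hw) ?_
  rintro (_ | ⟨a, _ | ⟨b, v⟩⟩) hv h
  · exact List.nil_sublist w
  · exact List.singleton_sublist.2 (hv a (by simp))
  · simp at h

lemma exists_absent {α : Type*} (w : List α) (hw : w ≠ []) :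
    ∃ u : List α, (∀ a ∈ u, a ∈ w) ∧ ¬ u.Sublist w ∧ u.length ≤ univIndex w + 1 := by
  by_contra! hc
  have : univIndex w + 1 ≤ univIndex w :=
    le_csSup (univIndex_bddAbove w hw) fun u hu hl => by
      by_contra hs
      exact absurd (hc u hu hs) (by omega)
  omega

/-- The shortest absent subsequences are the absent words of length `ι(w) + 1`. -/
lemma isSAS_iff {α : Type*} (w : List α) (hw : w ≠ []) (v : List α) :
    IsSAS w v ↔ (∀ a ∈ v, a ∈ w) ∧ ¬ v.Sublist w ∧ v.length = univIndex w + 1 := by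
  have low : ∀ u : List α, (∀ a ∈ u, a ∈ w) → ¬ u.Sublist w → univIndex w + 1 ≤ u.length := by
    intro u hu hs
    by_contra hl
    exact hs (sublist_of_length_le_univIndex w hw u hu (by omega))
  constructor
  · rintro ⟨h1, h2, h3⟩
    obtain ⟨u, hu, hs, hl⟩ := exists_absent w hw
    have := h3 u hu hs
    have := low v h1 h2
    exact ⟨h1, h2, by omega⟩
  · rintro ⟨h1, h2, h3⟩
    exact ⟨h1, h2, fun u hu hs => h3 ▸ low u hu hs⟩

/-- Theorem 3.5: characterisation of shortest absent subsequences via the arch factorisation.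
The arch factorisation `w = ar_w(1)⋯ar_w(ι(w))·r(w)` is given by `arches` and `rest`:
each arch is 1-universal (contains every letter of `w`), the last letter of each arch
occurs exactly once in it, and `alph(rest) ⊊ alph(w)`.
Positions are 1-based: `i ℓ` lies in the `ℓ`-th arch, and the conditions are those of
the MAS characterisation (Theorem 3.1). -/
theorem sas_characterisation {α : Type*} [Inhabited α] [DecidableEq α]
    (w : List α) (arches : List (List α)) (rest : List α)
    (hfact : w = arches.flatten ++ rest)
    (huniv : ∀ u ∈ arches, ∀ a ∈ w, a ∈ u)
    (hlastOnce : ∀ u ∈ arches, ∀ a : α, u.getLast? = some a → u.count a = 1)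
    (hrestProper : ∃ a ∈ w, a ∉ rest)
    (hnum : arches.length = univIndex w)
    (v : List α) :
    IsSAS w v ↔
      v.length = univIndex w + 1 ∧
      ∃ i : ℕ → ℕ,
        i 0 = 0 ∧ i (univIndex w + 1) = w.length + 1 ∧
        -- each position i ℓ lies inside the ℓ-th arch
        (∀ ℓ, 1 ≤ ℓ → ℓ ≤ univIndex w →
          (arches.take (ℓ - 1)).flatten.length < i ℓ ∧ i ℓ ≤ (arches.take ℓ).flatten.length) ∧
        -- (i)  v = w[i₁]⋯w[i_{ι(w)}]·v[ι(w)+1]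
        (∀ k, 1 ≤ k → k ≤ univIndex w →
          v.getD (k - 1) default = w.getD (i k - 1) default) ∧
        -- (ii)  v[1] ∉ alph(w[1 : i₁-1])
        v.getD 0 default ∉ w.take (i 1 - 1) ∧
        -- (iii)  v[k] ∉ alph(w[i_{k-1}+1 : i_k-1]) for all k ∈ [2 : ι(w)+1]
        (∀ k, 2 ≤ k → k ≤ univIndex w + 1 →
          v.getD (k - 1) default ∉ (w.drop (i (k - 1))).take (i k - 1 - i (k - 1))) ∧
        -- (iv)  v[k] ∈ alph(w[i_{k-2}+1 : i_{k-1}]) for all k ∈ [2 : ι(w)+1]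
        (∀ k, 2 ≤ k → k ≤ univIndex w + 1 →
          v.getD (k - 1) default ∈ (w.drop (i (k - 2))).take (i (k - 1) - i (k - 2))) := by
  have hw : w ≠ [] := by
    obtain ⟨a, ha, -⟩ := hrestProper
    exact List.ne_nil_of_mem ha
  rw [isSAS_iff w hw]
  have hm1 := one_le_univIndex w hw
  generalize univIndex w = m at *
  have hmem : ∀ k, 1 ≤ k → k ≤ v.length → v.getD (k - 1) default ∈ v := by
    intro k h1 h2
    rw [List.getD_eq_getElem _ _ (by omega)]
    exact List.getElem_mem _
  have hEle : ∀ k, (arches.take k).flatten.length ≤ w.length := by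
    intro k
    rw [hfact, List.length_append, flatten_take_add_drop arches k, List.length_append]
    omega
  have hE : ∀ k, w.take (arches.take k).flatten.length = (arches.take k).flatten := by
    intro k
    rw [hfact]
    exact take_arch_end arches rest k
  have hEmono : ∀ k l, k ≤ l →
      (arches.take k).flatten.length ≤ (arches.take l).flatten.length := by
    intro k l hkl
    exact ((List.take_sublist_take_left hkl).flatten).length_le
  constructor
  · rintro ⟨hv, habs, hlen⟩
    refine ⟨hlen, ?_⟩
    classical
    have hex : ∀ k, k ≤ m → (v.take k).Sublist (w.take (arches.take k).flatten.length) := by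
      intro k hk
      rw [hE]
      refine sublist_flatten_of_universal _ _ (fun b hb a ha => huniv b ?_ a (hv a ?_)) ?_
      · exact List.mem_of_mem_take hb
      · exact List.mem_of_mem_take ha
      · simp only [List.length_take]
        omega
    -- `f k` is the end of the leftmost embedding of the first `k` letters of `v`.
    let f : ℕ → ℕ := fun k => sInf {p | (v.take k).Sublist (w.take p)}
    have hfmem : ∀ k, k ≤ m → (v.take k).Sublist (w.take (f k)) := fun k hk =>
      Nat.sInf_mem (s := {p | (v.take k).Sublist (w.take p)}) ⟨_, hex k hk⟩
    have hfle : ∀ k p, (v.take k).Sublist (w.take p) → f k ≤ p := fun k p hp => Nat.sInf_le hp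
    have hfE : ∀ k, k ≤ m → f k ≤ (arches.take k).flatten.length := fun k hk =>
      hfle _ _ (hex k hk)
    have hflow : ∀ k, 1 ≤ k → k ≤ m → (arches.take (k - 1)).flatten.length < f k := by
      intro k h1 h2
      by_contra hc
      apply habs
      have s1 : (v.take k).Sublist (arches.take (k - 1)).flatten := by
        rw [← hE]
        exact (hfmem k h2).trans (List.take_sublist_take_left (by omega))
      have s2 : (v.drop k).Sublist (arches.drop (k - 1)).flatten := by
        refine sublist_flatten_of_universal _ _ (fun b hb a ha => huniv b ?_ a (hv a ?_)) ?_
        · exact List.mem_of_mem_drop hb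
        · exact List.mem_of_mem_drop ha
        · simp only [List.length_drop]
          omega
      have s3 := s1.append s2
      rw [List.take_append_drop, ← flatten_take_add_drop] at s3
      rw [hfact]
      exact s3.trans (List.sublist_append_left _ _)
    let i : ℕ → ℕ := fun k => if k ≤ m then f k else w.length + 1
    have hif : ∀ k, k ≤ m → i k = f k := fun k hk => if_pos hk
    have hilast : i (m + 1) = w.length + 1 := if_neg (by omega)
    have hi0 : i 0 = 0 := by
      rw [hif 0 (by omega)]
      exact Nat.le_zero.1 (hfle 0 0 (by simp))
    have hlow : ∀ k, 1 ≤ k → k ≤ m + 1 → (arches.take (k - 1)).flatten.length < i k := by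
      intro k h1 h2
      by_cases hk : k ≤ m
      · rw [hif k hk]
        exact hflow k h1 hk
      · obtain rfl : k = m + 1 := by omega
        have := hEle (m + 1 - 1)
        omega
    have hup : ∀ k, k ≤ m → i k ≤ (arches.take k).flatten.length := fun k hk => by
      rw [hif k hk]
      exact hfE k hk
    have hnot : ∀ k, 1 ≤ k → k ≤ m + 1 → ¬ (v.take k).Sublist (w.take (i k - 1)) := by
      intro k h1 h2 hs
      by_cases hk : k ≤ m
      · have := hlow k h1 h2
        have := hfle _ _ hs
        have := hif k hk
        omega
      · obtain rfl : k = m + 1 := by omega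
        rw [hilast, Nat.add_sub_cancel, List.take_length, ← hlen, List.take_length] at hs
        exact habs hs
    have hgap : ∀ k, 1 ≤ k → k ≤ m + 1 →
        v.getD (k - 1) default ∉ (w.drop (i (k - 1))).take (i k - 1 - i (k - 1)) := by
      intro k h1 h2 ha
      apply hnot k h1 h2
      have := hlow k h1 h2
      have := hup (k - 1) (by omega)
      rw [take_snoc v k h1 (by omega), take_split w (p := i (k - 1)) (q := i k - 1) (by omega)]
      refine List.Sublist.append ?_ (List.singleton_sublist.2 ha)
      rw [hif _ (by omega)]
      exact hfmem _ (by omega)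
    refine ⟨i, hi0, hilast, fun k h1 h2 => ⟨hlow k h1 (by omega), hup k h2⟩, ?_, ?_,
      fun k h1 h2 => hgap k (by omega) h2, ?_⟩
    · intro k h1 h2
      by_contra hne
      have a1 := hlow k h1 (by omega)
      have a2 := hup k h2
      have a3 := hEle k
      apply hnot k h1 (by omega)
      have hs := hfmem k h2
      rw [← hif k h2, take_snoc w (i k) (by omega) (by omega),
        take_snoc v k h1 (by omega)] at hs
      rw [take_snoc v k h1 (by omega)]
      exact snoc_sublist_of_not_mem hs (by simpa using hne)
    · simpa [hi0] using hgap 1 (by omega) (by omega)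
    · intro k h1 h2
      have hk : k - 2 < arches.length := by omega
      have ha : v.getD (k - 1) default ∈ arches[k - 2] :=
        huniv _ (List.getElem_mem _) _ (hv _ (hmem k (by omega) (by omega)))
      obtain ⟨j, j1, j2, j3⟩ := exists_index_in_arch arches rest (k - 2) hk _ ha
      rw [← hfact] at j3
      rw [show k - 2 + 1 = k - 1 by omega] at j2
      have b1 := hup (k - 2) (by omega)
      refine (mem_slice _ _ _ _).2 ⟨j, by omega, ?_, j3⟩
      -- An occurrence of `v[k]` in this arch beyond `i (k - 1)` would contradict (iii).
      by_contra hj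
      have b2 := hlow k (by omega) h2
      exact hgap k (by omega) h2 ((mem_slice _ _ _ _).2 ⟨j, by omega, by omega, j3⟩)
  · rintro ⟨hlen, i, hi0, hilast, hpos, h1, h2, h3, h4⟩
    have hlow : ∀ k, 1 ≤ k → k ≤ m + 1 → (arches.take (k - 1)).flatten.length < i k := by
      intro k a1 a2
      by_cases hk : k ≤ m
      · exact (hpos k a1 hk).1
      · obtain rfl : k = m + 1 := by omega
        have := hEle (m + 1 - 1)
        omega
    refine ⟨?_, ?_, hlen⟩
    · intro a ha
      obtain ⟨d, hd, rfl⟩ := List.getElem_of_mem ha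
      rw [← List.getD_eq_getElem v default hd]
      rcases Nat.eq_zero_or_pos d with rfl | hd0
      · have b1 := hpos 1 le_rfl hm1
        have b2 := hEle 1
        rw [h1 1 le_rfl hm1, List.getD_eq_getElem _ _ (by omega)]
        exact List.getElem_mem _
      · have := h4 (d + 1) (by omega) (by omega)
        exact List.mem_of_mem_drop (List.mem_of_mem_take this)
    · have key : ∀ k, k ≤ m → ¬ (v.take (k + 1)).Sublist (w.take (i (k + 1) - 1)) := by
        intro k
        induction k with
        | zero =>
          intro _ hs
          rw [take_snoc v (0 + 1) (by omega) (by omega)] at hs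
          exact h2 (hs.subset (by simp))
        | succ k ih =>
          intro hk hs
          have c1 := hpos (k + 1) (by omega) hk
          have c2 := hlow (k + 1 + 1) (by omega) (by omega)
          have c3 := hEle (k + 1)
          have c4 := h3 (k + 1 + 1) (by omega) (by omega)
          simp only [Nat.add_sub_cancel] at c1 c2 c4
          rw [take_snoc v (k + 1 + 1) (by omega) (by omega),
            take_split w (p := i (k + 1)) (q := i (k + 1 + 1) - 1) (by omega)] at hs
          have hs' := snoc_sublist_of_not_mem hs c4
          rw [take_snoc w (i (k + 1)) (by omega) (by omega)] at hs'
          exact ih (by omega) (sublist_of_snoc_sublist_snoc hs')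
      have := key m le_rfl
      rwa [hilast, Nat.add_sub_cancel, List.take_length, ← hlen, List.take_length] at this
end

section
/- If w′ is a subsequence of w and ι(w) = ι(w′), then every shortest absent subsequence of w is a shortest absent subsequence of w′, i.e., sas(w) ⊆ sas(w′). -/
theorem bddAbove_of_absent {α : Type*} {w v : List α} (hv : ∀ a ∈ v, a ∈ w)
    (h : ¬ v.Sublist w) :
    BddAbove {k | ∀ v : List α, (∀ a ∈ v, a ∈ w) → v.length ≤ k → v.Sublist w} :=
  ⟨v.length, fun _ hk => le_of_not_ge fun hle => h (hk v hv hle)⟩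

theorem univIndex_lt_length_of_absent {α : Type*} {w u : List α} (hu : ∀ a ∈ u, a ∈ w)
    (h : ¬ u.Sublist w) : univIndex w < u.length := by
  have hne : {k | ∀ v : List α, (∀ a ∈ v, a ∈ w) → v.length ≤ k → v.Sublist w}.Nonempty :=
    ⟨0, fun v _ hv => by simp [List.length_eq_zero_iff.mp (Nat.le_zero.mp hv)]⟩
  -- The supremum is attained, so all words of length at most `univIndex w` embed in `w`.
  have hmem := Nat.sSup_mem hne (bddAbove_of_absent hu h)
  exact lt_of_not_ge fun hle => h (hmem u hu hle)

theorem IsSAS.length_le_univIndex_succ {α : Type*} {w v : List α} (h : IsSAS w v) :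
    v.length ≤ univIndex w + 1 := by
  obtain ⟨hv, habs, hmin⟩ := h
  have hpos : v.length ≠ 0 := fun h0 => habs (by simp [List.length_eq_zero_iff.mp h0])
  have hle : v.length - 1 ≤ univIndex w := by
    refine le_csSup (bddAbove_of_absent hv habs) fun u hu hlen => ?_
    by_contra hn
    have := hmin u hu hn
    omega
  omega

/-- Lemma 3.13: if `w'` is a subsequence of `w` (with `alph(w) = alph(w') = Σ`)
and `ι(w) = ι(w')`, then `sas(w) ⊆ sas(w')`. -/
theorem sas_subset_of_sublist {α : Type*} (w w' : List α)
    (hsub : w'.Sublist w) (hw : ∀ a : α, a ∈ w) (hw' : ∀ a : α, a ∈ w')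
    (hι : univIndex w = univIndex w') :
    {v : List α | IsSAS w v} ⊆ {v : List α | IsSAS w' v} := by
  intro v hv
  refine ⟨fun a _ => hw' a, fun h => hv.2.1 (h.trans hsub), fun u hu hn => ?_⟩
  have h1 := hv.length_le_univIndex_succ
  have h2 := univIndex_lt_length_of_absent hu hn
  omega
end

section
/- Let w be a word over Σ with alph(w) = Σ and with arch factorisation w = ar_w(1)⋯ar_w(k)·r(w), let m(w) be the word formed by the unique last letters of the arches (m(w) = ar_w(1)[|ar_w(1)|]⋯ar_w(k)[|ar_w(k)|]), and let a be any letter of Σ not occurring in r(w). Then m(w)·a is a shortest absent subsequence of w. -/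
/-- If the first occurrence of `c` in `p ++ c :: t` is the displayed one, an embedding of `c :: v`
leaves only `t` for the remaining letters `v`. -/
theorem sublist_of_cons_sublist_append_cons {α : Type*} {c : α} {p t v : List α}
    (hc : c ∉ p) (h : (c :: v).Sublist (p ++ c :: t)) : v.Sublist t := by
  induction p with
  | nil => simpa using h
  | cons x p ih =>
    rw [List.mem_cons, not_or] at hc
    rw [List.cons_append] at h
    cases h with
    | cons _ h => exact ih hc.2 h
    | cons_cons _ h => exact absurd rfl hc.1

theorem not_mword_append_sublist {α : Type*} [DecidableEq α]
    (arches : List (List α)) (rest : List α)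
    (hlastOnce : ∀ u ∈ arches, ∀ a : α, u.getLast? = some a → u.count a = 1)
    (a : α) (ha : a ∉ rest) :
    ¬ (arches.filterMap List.getLast? ++ [a]).Sublist (arches.flatten ++ rest) := by
  induction arches with
  | nil => simpa using ha
  | cons u us ih =>
    have ih' := ih fun v hv => hlastOnce v (List.mem_cons_of_mem _ hv)
    -- An empty block contributes neither to `m(w)` nor to `w`.
    rcases List.eq_nil_or_concat u with rfl | ⟨p, c, rfl⟩
    · simpa [List.filterMap_cons] using ih'
    · have hcount := hlastOnce _ List.mem_cons_self c (by simp)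
      have hc : c ∉ p := by
        rw [← List.count_eq_zero]
        simpa using hcount
      intro h
      apply ih'
      apply sublist_of_cons_sublist_append_cons hc
      simpa [List.filterMap_cons] using h

theorem sublist_flatten_of_length_le {α : Type*} (arches : List (List α)) (v : List α)
    (huniv : ∀ u ∈ arches, ∀ x ∈ v, x ∈ u) (hlen : v.length ≤ arches.length) :
    v.Sublist arches.flatten := by
  induction arches generalizing v with
  | nil => simp_all
  | cons u us ih =>
    cases v with
    | nil => simp
    | cons x v =>
      have hx : [x].Sublist u :=
        List.singleton_sublist.2 (huniv u List.mem_cons_self x List.mem_cons_self)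
      have hv : v.Sublist us.flatten :=
        ih v (fun u' hu' y hy =>
          huniv u' (List.mem_cons_of_mem _ hu') y (List.mem_cons_of_mem _ hy)) (by simpa using hlen)
      simpa using hx.append hv

/-- Lemma 4.6: let `w = ar_w(1)⋯ar_w(k)·r(w)` be the arch factorisation of `w`
(each arch is 1-universal, i.e. contains every letter of `w`, and its last letter occurs
exactly once in it; `alph(r(w)) ⊊ alph(w)`), let `m(w)` be the word formed by the last
letters of the arches, and let `a` be a letter of `alph(w)` not occurring in `r(w)`.
Then `m(w)·a` is an SAS of `w`. -/
theorem mword_append_isSAS {α : Type*} [DecidableEq α]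
    (w : List α) (arches : List (List α)) (rest : List α)
    (hfact : w = arches.flatten ++ rest)
    (huniv : ∀ u ∈ arches, ∀ a ∈ w, a ∈ u)
    (hlastOnce : ∀ u ∈ arches, ∀ a : α, u.getLast? = some a → u.count a = 1)
    (hrestProper : ∃ a ∈ w, a ∉ rest)
    (a : α) (ha : a ∈ w) (ha' : a ∉ rest) :
    IsSAS w (arches.filterMap List.getLast? ++ [a]) := by
  refine ⟨?_, ?_, ?_⟩
  · intro x hx
    rw [List.mem_append, List.mem_filterMap, List.mem_singleton] at hx
    rcases hx with ⟨u, hu, hxu⟩ | rfl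
    · rw [hfact]
      exact List.mem_append_left _ (List.mem_flatten.2 ⟨u, hu, List.mem_of_getLast? hxu⟩)
    · exact ha
  · rw [hfact]
    exact not_mword_append_sublist arches rest hlastOnce a ha'
  · intro v hv habs
    have hm : (arches.filterMap List.getLast?).length ≤ arches.length :=
      List.length_filterMap_le _ _
    by_contra! hlt
    rw [List.length_append, List.length_singleton] at hlt
    apply habs
    rw [hfact]
    exact (sublist_flatten_of_length_le arches v (fun u hu x hx => huniv u hu x (hv x hx))
      (by omega)).trans (List.sublist_append_left _ _)
end
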